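/- arXiv:2503.12742 — 8 statements merged into one kernel-verified Lean document; each statement's English description precedes it below -/
import Mathlib

section
/- Let Λ be an index set, Υ ⊆ Λ a finite subset, and B a group acting on a set I_λ for each λ ∈ Λ, so that each action B ↷ I_λ is transitive and every point stabilizer is finite. Let U be an untwisted generalized wreath-like product of the family {A_{λ,i}} over B, i.e. there are a surjective group homomorphism ε : U → B and subgroups A_{λ,i} ≤ U (λ ∈ Λ, i ∈ I_λ) satisfying conditions (i)–(v) of the context. Assume that for every λ ∈ Υ one of the following holds: (a) the subgroups A_{λ,i} are infinite cyclic; or (b) the subgroups A_{λ,i} are abelian and the action B ↷ I_λ is regular (transitive with trivial point stabilizers). Then there exists a normal subgroup N of U contained in baseΥ := ⨆_{λ∈Υ, i∈I_λ} A_{λ,i} such that, in the quotient Q = U/N, the image K of baseΥ is contained in the center of Q and, for any choice of basepoints i₀(λ) ∈ I_λ, K is isomorphic to the direct product ∏_{λ∈Υ} A_{λ,i₀(λ)}. Moreover, Q/K is isomorphic to U/baseΥ, and the images of the subgroups A_{λ,i} with λ ∈ Λ∖Υ in U/baseΥ again satisfy conditions (i)–(v) with respect to the induced surjection U/baseΥ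 → B, each such image being isomorphic to A_{λ,i}. -/
universe u v

/-- `U` is an *untwisted generalized wreath-like product* of the family of subgroups
`A l i ≤ U` (`l : Λ`, `i : I l`) over `B` with respect to the surjection `ε : U → B`:
conditions (i)–(v) of the definition, together with surjectivity of `ε`. -/
structure IsUntwistedGWP {U : Type*} {B : Type*} [Group U] [Group B] {Λ : Type*}
    {I : Λ → Type*} [∀ l : Λ, MulAction B (I l)]
    (ε : U →* B) (A : ∀ l : Λ, I l → Subgroup U) : Prop where
  /-- `ε` is surjective. -/
  surjective : Function.Surjective ε
  /-- (i) each `A l i` is contained in `ker ε`. -/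
  le_ker : ∀ (l : Λ) (i : I l), A l i ≤ ε.ker
  /-- (ii) elements of distinct members of the family commute. -/
  commute : ∀ p q : Σ l : Λ, I l, p ≠ q → ∀ x ∈ A p.1 p.2, ∀ y ∈ A q.1 q.2, Commute x y
  /-- (iii) the family is independent … -/
  independent : iSupIndep fun p : Σ l : Λ, I l => A p.1 p.2
  /-- (iii) … and its supremum is `ker ε`. -/
  iSup_eq_ker : (⨆ p : Σ l : Λ, I l, A p.1 p.2) = ε.ker
  /-- (iv) `u • (A l i) • u⁻¹ = A l (ε u • i)`. -/
  conj_eq : ∀ (u : U) (l : Λ) (i : I l),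
    (A l i).map (MulAut.conj u).toMonoidHom = A l (ε u • i)
  /-- (v) (untwisted) every `u` with `ε u • i = i` commutes with all of `A l i`. -/
  untwisted : ∀ (l : Λ) (i : I l) (u : U), ε u • i = i → ∀ a ∈ A l i, Commute u a

/-- The subgroup `baseΥ = ⨆ (l ∈ Υ) (i : I l), A l i` of `U`. -/
def baseOn {U : Type*} [Group U] {Λ : Type*} {I : Λ → Type*}
    (A : ∀ l : Λ, I l → Subgroup U) (Υ : Set Λ) : Subgroup U :=
  ⨆ (l : Λ) (_ : l ∈ Υ) (i : I l), A l i


theorem gwp_exists_hom_add {ι M H : Type*} [AddCommGroup M] [AddCommGroup H]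
    (C : ι → AddSubgroup M) (hC : iSupIndep C) (htop : (⨆ i, C i) = ⊤)
    (f : ∀ i, C i →+ H) : ∃ F : M →+ H, ∀ i (x : C i), F x = f i x := by
  classical
  have hinj := hC.dfinsuppSumAddHom_injective
  have hsurj : Function.Surjective (DFinsupp.sumAddHom fun i => (C i).subtype) := by
    rw [← AddMonoidHom.range_eq_top, eq_top_iff, ← htop]
    refine iSup_le fun i x hx => ⟨DFinsupp.single i ⟨x, hx⟩, ?_⟩
    simp
  let e := AddEquiv.ofBijective _ ⟨hinj, hsurj⟩
  refine ⟨(DFinsupp.sumAddHom f).comp e.symm.toAddMonoidHom, fun i x => ?_⟩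
  have : e.symm (x : M) = DFinsupp.single i x := by
    rw [AddEquiv.symm_apply_eq]
    change (x : M) = DFinsupp.sumAddHom (fun i => (C i).subtype) (DFinsupp.single i x)
    simp
  simp [this]

theorem gwp_exists_hom {ι M H : Type*} [CommGroup M] [CommGroup H]
    (C : ι → Subgroup M) (hC : iSupIndep C) (htop : (⨆ i, C i) = ⊤)
    (f : ∀ i, C i →* H) : ∃ F : M →* H, ∀ i (x : C i), F x = f i x := by
  have h1 : iSupIndep fun i => (C i).toAddSubgroup := hC.map_orderIso Subgroup.toAddSubgroup
  have h2 : (⨆ i, (C i).toAddSubgroup) = ⊤ := by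
    rw [← OrderIso.map_iSup, htop, OrderIso.map_top]
  obtain ⟨F, hF⟩ := gwp_exists_hom_add (H := Additive H) _ h1 h2
    (fun i => MonoidHom.toAdditive (f i))
  exact ⟨MonoidHom.toAdditive.symm F, fun i x => hF i x⟩

theorem gwp_iso {G H K : Type*} [Group G] [Group H] [Group K] (f : G →* H) (g : G →* K)
    (hf : Function.Surjective f) (hg : Function.Surjective g) (h : f.ker = g.ker) :
    Nonempty (H ≃* K) :=
  ⟨(QuotientGroup.quotientKerEquivOfSurjective f hf).symm.trans
    ((QuotientGroup.quotientMulEquivOfEq h).trans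
      (QuotientGroup.quotientKerEquivOfSurjective g hg))⟩

section
variable {U : Type*} {B : Type*} [Group U] [Group B] {Λ : Type*} {I : Λ → Type*}
    [∀ l : Λ, MulAction B (I l)] {ε : U →* B} {A : ∀ l : Λ, I l → Subgroup U}

theorem gwp_ker_comm (hU : IsUntwistedGWP ε A) :
    ∀ x ∈ ε.ker, ∀ y ∈ ε.ker, x * y = y * x := by
  intro x hx y hy
  have : ε.ker ≤ Subgroup.centralizer {x} := by
    rw [← hU.iSup_eq_ker]
    refine iSup_le fun p a ha => ?_
    rw [Subgroup.mem_centralizer_singleton_iff]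
    exact (hU.untwisted p.1 p.2 x (by rw [MonoidHom.mem_ker.1 hx, one_smul]) a ha).eq.symm
  exact (Subgroup.mem_centralizer_singleton_iff.1 (this hy)).symm

theorem gwp_conj_mem (hU : IsUntwistedGWP ε A) (u : U) {l : Λ} {i : I l} {x : U}
    (hx : x ∈ A l i) : u * x * u⁻¹ ∈ A l (ε u • i) := by
  rw [← hU.conj_eq u l i]
  exact ⟨x, hx, rfl⟩

theorem gwp_base_normal (hU : IsUntwistedGWP ε A) (Υ : Set Λ) : (baseOn A Υ).Normal := by
  refine ⟨fun n hn g => ?_⟩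
  have : baseOn A Υ ≤ (baseOn A Υ).comap (MulAut.conj g).toMonoidHom := by
    refine iSup_le fun l => iSup_le fun hl => iSup_le fun i x hx => ?_
    have h3 : A l (ε g • i) ≤ baseOn A Υ :=
      le_iSup_of_le l (le_iSup_of_le hl (le_iSup (fun i => A l i) (ε g • i)))
    exact h3 (gwp_conj_mem hU g hx)
  exact this hn

theorem gwp_le_base {Υ : Set Λ} {l : Λ} (hl : l ∈ Υ) (i : I l) : A l i ≤ baseOn A Υ :=
  le_iSup_of_le l (le_iSup_of_le hl (le_iSup (fun i => A l i) i))

theorem gwp_base_le_ker (hU : IsUntwistedGWP ε A) (Υ : Set Λ) : baseOn A Υ ≤ ε.ker :=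
  iSup_le fun l => iSup_le fun _ => iSup_le fun i => hU.le_ker l i

theorem gwp_exists_F (hU : IsUntwistedGWP ε A)
    (htrans : ∀ (l : Λ) (i j : I l), ∃ b : B, b • i = j) (l : Λ) (i₀ : I l) :
    ∃ F : ε.ker →* A l i₀,
      (∀ (i : I l) (x : ε.ker), (x : U) ∈ A l i → ∀ u : U, ε u • i = i₀ →
        (F x : U) = u * x * u⁻¹) ∧
      (∀ (m : Λ) (i : I m) (x : ε.ker), (x : U) ∈ A m i → m ≠ l → F x = 1) := by
  let _ : CommGroup ε.ker :=
    { (inferInstance : Group ε.ker) with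
      mul_comm := fun x y => Subtype.ext (gwp_ker_comm hU x x.2 y y.2) }
  let _ : CommGroup (A l i₀) :=
    { (inferInstance : Group (A l i₀)) with
      mul_comm := fun x y => Subtype.ext
        (gwp_ker_comm hU x (hU.le_ker _ _ x.2) y (hU.le_ker _ _ y.2)) }
  let C : (Σ l : Λ, I l) → Subgroup ε.ker := fun p => (A p.1 p.2).subgroupOf ε.ker
  have hC : iSupIndep C := by
    intro p
    rw [Subgroup.disjoint_def]
    intro x hx hx'
    have h1 := Subgroup.disjoint_def.1 (hU.independent p) (x := (x : U)) hx
    refine Subtype.ext (h1 ?_)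
    have h2 : (⨆ j, ⨆ (_ : j ≠ p), C j) ≤
        (⨆ j : Σ l : Λ, I l, ⨆ (_ : j ≠ p), A j.1 j.2).comap ε.ker.subtype := by
      refine iSup_le fun j => iSup_le fun hj y hy => ?_
      exact (le_iSup₂_of_le (f := fun (j : Σ l : Λ, I l) (_ : j ≠ p) => A j.1 j.2) j hj le_rfl) hy
    exact h2 hx'
  have htop : (⨆ p, C p) = ⊤ := by
    apply Subgroup.map_injective ε.ker.subtype_injective
    rw [Subgroup.map_iSup]
    have : ∀ p, (C p).map ε.ker.subtype = A p.1 p.2 := fun p => by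
      simp only [C, Subgroup.subgroupOf_map_subtype]
      exact inf_eq_left.2 (hU.le_ker _ _)
    simp only [this]
    rw [hU.iSup_eq_ker, ← MonoidHom.range_eq_map, Subgroup.range_subtype]
  have hf : ∀ p : Σ l : Λ, I l, ∃ f : C p →* A l i₀,
      (∀ (i : I l), p = ⟨l, i⟩ → ∀ (x : C p) (u : U), ε u • i = i₀ →
        (f x : U) = u * x * u⁻¹) ∧ (p.1 ≠ l → ∀ x, f x = 1) := by
    rintro ⟨m, i⟩
    by_cases hm : m = l
    · subst hm
      obtain ⟨b, hb⟩ := htrans m i i₀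
      obtain ⟨v, rfl⟩ := hU.surjective b
      refine ⟨((MulAut.conj v).toMonoidHom.comp (ε.ker.subtype.comp (C ⟨m, i⟩).subtype)).codRestrict
        (A m i₀) ?_, ?_, fun h => absurd rfl h⟩
      · intro x
        have := gwp_conj_mem hU v (l := m) (i := i) x.2
        rw [hb] at this
        exact this
      · intro j hj x u hu
        obtain rfl : i = j := by simpa using hj
        have h := (hU.untwisted m i (v⁻¹ * u) (by
          rw [map_mul, mul_smul, hu, ← hb, ← mul_smul, ← map_mul]; simp) (x : U) x.2).eq
        change v * (x : U) * v⁻¹ = u * x * u⁻¹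
        calc v * (x : U) * v⁻¹ = v * ((x : U) * (v⁻¹ * u)) * u⁻¹ := by group
          _ = v * ((v⁻¹ * u) * x) * u⁻¹ := by rw [h]
          _ = u * x * u⁻¹ := by group
    · exact ⟨1, fun j hj => absurd (congrArg Sigma.fst hj) hm, fun _ _ => rfl⟩
  choose f hf1 hf2 using hf
  obtain ⟨F, hF⟩ := gwp_exists_hom C hC htop f
  refine ⟨F, fun i x hx u hu => ?_, fun m i x hx hm => ?_⟩
  · have := hF ⟨l, i⟩ ⟨x, hx⟩
    rw [show F x = _ from this]
    exact hf1 ⟨l, i⟩ i rfl ⟨x, hx⟩ u hu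
  · have := hF ⟨m, i⟩ ⟨x, hx⟩
    rw [show F x = _ from this]
    exact hf2 ⟨m, i⟩ hm _

theorem gwp_iso_prod (hU : IsUntwistedGWP ε A)
    (htrans : ∀ (l : Λ) (i j : I l), ∃ b : B, b • i = j) (Υ : Set Λ) (hfin : Υ.Finite)
    (i₀ : ∀ l : Υ, I l.1) {Q : Type*} [Group Q] (π : U →* Q)
    (hπ : π.ker = ⁅(⊤ : Subgroup U), baseOn A Υ⁆) :
    Nonempty (((baseOn A Υ).map π) ≃* ((l : Υ) → A l.1 (i₀ l))) := by
  classical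
  have : Finite Υ := hfin
  let _ : Fintype Υ := Fintype.ofFinite Υ
  let _ : CommGroup ε.ker :=
    { (inferInstance : Group ε.ker) with
      mul_comm := fun x y => Subtype.ext (gwp_ker_comm hU x x.2 y y.2) }
  choose F hF1 hF2 using fun l : Υ => gwp_exists_F hU htrans l.1 (i₀ l)
  have hbk := gwp_base_le_ker hU Υ
  have hkc : ∀ (u : U) (x : ε.ker), u * x * u⁻¹ ∈ ε.ker := fun u x =>
    (inferInstance : ε.ker.Normal).conj_mem x x.2 u
  -- invariance
  have hinv : ∀ (l : Υ) (u : U) (x : ε.ker), F l ⟨u * x * u⁻¹, hkc u x⟩ = F l x := by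
    intro l u
    let cu : ε.ker →* ε.ker := ((MulAut.conj u).toMonoidHom.comp ε.ker.subtype).codRestrict
      ε.ker (hkc u)
    have h : ε.ker ≤ (MonoidHom.eqLocus ((F l).comp cu) (F l)).map ε.ker.subtype := by
      conv_lhs => rw [← hU.iSup_eq_ker]
      refine iSup_le ?_
      rintro ⟨m, i⟩ x hx
      have hxk : x ∈ ε.ker := hU.le_ker _ _ hx
      refine ⟨⟨x, hxk⟩, ?_, rfl⟩
      change F l (cu ⟨x, hxk⟩) = F l ⟨x, hxk⟩
      have hcx : ((cu ⟨x, hxk⟩ : ε.ker) : U) = u * x * u⁻¹ := rfl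
      have hmem := gwp_conj_mem hU u hx
      by_cases hm : m = l.1
      · subst hm
        obtain ⟨b, hb⟩ := htrans l.1 (ε u • i) (i₀ l)
        obtain ⟨v, rfl⟩ := hU.surjective b
        apply Subtype.ext
        rw [hF1 l _ (cu ⟨x, hxk⟩) hmem v hb, hF1 l i ⟨x, hxk⟩ hx (v * u)
          (by rw [map_mul, mul_smul, hb]), hcx]
        simp only
        group
      · rw [hF2 l m _ (cu ⟨x, hxk⟩) hmem hm, hF2 l m i ⟨x, hxk⟩ hx hm]
    intro x
    obtain ⟨y, hy, hyx⟩ := h x.2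
    obtain rfl : y = x := Subtype.ext hyx
    exact hy
  let Ft : ε.ker →* ((l : Υ) → A l.1 (i₀ l)) := MonoidHom.pi F
  let G : baseOn A Υ →* ((l : Υ) → A l.1 (i₀ l)) := Ft.comp (Subgroup.inclusion hbk)
  have hGsurj : Function.Surjective G := by
    rw [← MonoidHom.range_eq_top, eq_top_iff]
    intro y _
    refine Subgroup.pi_mem_of_mulSingle_mem y fun l => ?_
    have hy := (y l).2
    refine ⟨⟨y l, gwp_le_base l.2 _ hy⟩, ?_⟩
    funext m
    change F m _ = _
    by_cases hm : m = l
    · subst hm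
      rw [Pi.mulSingle_eq_same]
      apply Subtype.ext
      rw [hF1 m (i₀ m) _ hy 1 (by simp)]
      simp
    · rw [Pi.mulSingle_eq_of_ne hm]
      exact hF2 m l.1 (i₀ l) _ hy (fun h => hm (Subtype.ext h.symm))
  let P : baseOn A Υ →* (baseOn A Υ).map π := π.subgroupMap (baseOn A Υ)
  refine gwp_iso P G (MonoidHom.subgroupMap_surjective π _) hGsurj ?_
  have hP : ∀ x : baseOn A Υ, x ∈ P.ker ↔ (x : U) ∈ π.ker := fun x => by
    rw [MonoidHom.mem_ker, MonoidHom.mem_ker, Subtype.ext_iff]; rfl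
  ext x
  rw [hP]
  constructor
  · intro hx
    have h : π.ker ≤ Ft.ker.map ε.ker.subtype := by
      rw [hπ, Subgroup.commutator_le]
      intro u _ y hy
      have hyk := hbk hy
      refine ⟨⟨u * y * u⁻¹, hkc u ⟨y, hyk⟩⟩ * ⟨y, hyk⟩⁻¹, ?_, rfl⟩
      rw [SetLike.mem_coe, MonoidHom.mem_ker, map_mul, map_inv, mul_inv_eq_one]
      funext l
      exact hinv l u ⟨y, hyk⟩
    obtain ⟨y, hy, hyx⟩ := h hx
    obtain rfl : y = Subgroup.inclusion hbk x := Subtype.ext hyx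
    exact hy
  · intro hx
    let J : ∀ l : Υ, ε.ker →* ε.ker := fun l =>
      (Subgroup.inclusion (hU.le_ker l.1 (i₀ l))).comp (F l)
    let T : ε.ker →* ε.ker := ∏ l : Υ, J l
    have hT : ∀ y, T y = ∏ l : Υ, J l y := fun y => MonoidHom.finsetProd_apply _ _ _
    have h : baseOn A Υ ≤ (MonoidHom.eqLocus (π.comp (ε.ker.subtype.comp T))
        (π.comp ε.ker.subtype)).map ε.ker.subtype := by
      refine iSup_le fun l => iSup_le fun hl => iSup_le fun i y hy => ?_
      have hyk : y ∈ ε.ker := hU.le_ker _ _ hy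
      refine ⟨⟨y, hyk⟩, ?_, rfl⟩
      change π (T ⟨y, hyk⟩) = π y
      obtain ⟨b, hb⟩ := htrans l i (i₀ ⟨l, hl⟩)
      obtain ⟨v, rfl⟩ := hU.surjective b
      have h1 : (T ⟨y, hyk⟩ : U) = v * y * v⁻¹ := by
        rw [hT, Finset.prod_eq_single (⟨l, hl⟩ : Υ)]
        · exact hF1 ⟨l, hl⟩ i ⟨y, hyk⟩ hy v hb
        · intro m _ hm
          have := hF2 m l i ⟨y, hyk⟩ hy (fun h => hm (Subtype.ext h.symm))
          simp only [J, MonoidHom.comp_apply, this, map_one]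
        · intro h; exact absurd (Finset.mem_univ _) h
      rw [h1]
      have h2 : v * y * v⁻¹ * y⁻¹ ∈ π.ker := by
        rw [hπ]
        exact Subgroup.commutator_mem_commutator (Subgroup.mem_top v) (gwp_le_base hl i hy)
      rw [MonoidHom.mem_ker, map_mul, map_inv, mul_inv_eq_one] at h2
      exact h2
    obtain ⟨y, hy, hyx⟩ := h x.2
    obtain rfl : y = Subgroup.inclusion hbk x := Subtype.ext hyx
    have hy' : π (T (Subgroup.inclusion hbk x)) = π x := hy
    rw [MonoidHom.mem_ker, ← hy', hT, Finset.prod_eq_one]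
    · simp
    · intro l _
      have : F l (Subgroup.inclusion hbk x) = 1 := congrFun (MonoidHom.mem_ker.1 hx) l
      simp only [J, MonoidHom.comp_apply, this, map_one]

end

/-- Let `U` be an untwisted generalized wreath-like product of the family
`{A l i}` over `B`, where each action `B ↷ I l` is transitive with finite stabilizers, and let
`Υ ⊆ Λ` be a finite subset such that for every `l ∈ Υ` either (a) the `A l i` are infinite
cyclic, or (b) they are abelian and the action `B ↷ I l` is regular.  Then there is a normal
subgroup `N ≤ baseΥ` of `U` such that in `Q = U/N` the image `K` of `baseΥ` is central and is
isomorphic to `∏_{l ∈ Υ} A l (i₀ l)` for any choice of basepoints, while `Q/K ≅ U/baseΥ` and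
the images of the `A l i` with `l ∉ Υ` in `U/baseΥ` again form an untwisted generalized
wreath-like product over `B`, each image being isomorphic to `A l i`. -/
theorem central_quotient_of_untwisted_gwp
    {U : Type u} {B : Type v} [Group U] [Group B] {Λ : Type*} {I : Λ → Type*}
    [∀ l : Λ, MulAction B (I l)]
    (Υ : Set Λ) (hfin : Υ.Finite)
    (htrans : ∀ (l : Λ) (i j : I l), ∃ b : B, b • i = j)
    (hstab : ∀ (l : Λ) (i : I l), Finite (MulAction.stabilizer B i))
    (ε : U →* B) (A : ∀ l : Λ, I l → Subgroup U)
    (hU : IsUntwistedGWP ε A)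
    (hΥ : ∀ l ∈ Υ,
      (∀ i : I l, Nonempty (A l i ≃* Multiplicative ℤ)) ∨
      ((∀ i : I l, ∀ x ∈ A l i, ∀ y ∈ A l i, Commute x y) ∧
        ∀ (i : I l) (b : B), b • i = i → b = 1)) :
    ∃ N : Subgroup U, N.Normal ∧ N ≤ baseOn A Υ ∧
      ∃ (Q : Type u) (_ : Group Q) (π : U →* Q),
        Function.Surjective π ∧ π.ker = N ∧
        (baseOn A Υ).map π ≤ Subgroup.center Q ∧
        (∀ i₀ : ∀ l : Υ, I l.1,
          Nonempty (((baseOn A Υ).map π) ≃* ((l : Υ) → A l.1 (i₀ l)))) ∧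
        ∃ (R : Type u) (_ : Group R) (ρ : Q →* R) (ρ' : U →* R),
          Function.Surjective ρ ∧ ρ.ker = (baseOn A Υ).map π ∧
          Function.Surjective ρ' ∧ ρ'.ker = baseOn A Υ ∧
          ∃ δ : R →* B,
            (∀ u : U, δ (ρ' u) = ε u) ∧
            IsUntwistedGWP δ
              (fun (l : {l : Λ // l ∉ Υ}) (i : I l.1) => (A l.1 i).map ρ') ∧
            ∀ (l : {l : Λ // l ∉ Υ}) (i : I l.1),
              Nonempty (((A l.1 i).map ρ') ≃* A l.1 i) := by
  classical
  have hbn := gwp_base_normal hU Υ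
  have hbk := gwp_base_le_ker hU Υ
  have hNle : ⁅(⊤ : Subgroup U), baseOn A Υ⁆ ≤ baseOn A Υ := Subgroup.commutator_le_right _ _
  have hNn : (⁅(⊤ : Subgroup U), baseOn A Υ⁆).Normal := inferInstance
  refine ⟨⁅(⊤ : Subgroup U), baseOn A Υ⁆, hNn, hNle,
    U ⧸ ⁅(⊤ : Subgroup U), baseOn A Υ⁆, inferInstance, QuotientGroup.mk' _,
    QuotientGroup.mk'_surjective _, QuotientGroup.ker_mk' _, ?_, fun i₀ =>
      gwp_iso_prod hU htrans Υ hfin i₀ _ (QuotientGroup.ker_mk' _),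
    U ⧸ baseOn A Υ, inferInstance,
    QuotientGroup.lift _ (QuotientGroup.mk' (baseOn A Υ)) (fun x hx => ?_),
    QuotientGroup.mk' _, ?_, ?_, QuotientGroup.mk'_surjective _, QuotientGroup.ker_mk' _,
    QuotientGroup.lift _ ε hbk, fun u => rfl, ?_, ?_⟩
  · rintro _ ⟨x, hx, rfl⟩
    rw [Subgroup.mem_center_iff]
    intro q
    obtain ⟨u, rfl⟩ := QuotientGroup.mk'_surjective _ q
    have h2 : u * x * u⁻¹ * x⁻¹ ∈ (QuotientGroup.mk' ⁅(⊤ : Subgroup U), baseOn A Υ⁆).ker := by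
      rw [QuotientGroup.ker_mk']
      exact Subgroup.commutator_mem_commutator (Subgroup.mem_top u) hx
    rw [MonoidHom.mem_ker, map_mul, map_inv, mul_inv_eq_one, map_mul, map_inv,
      mul_inv_eq_iff_eq_mul, map_mul] at h2
    exact h2
  · exact (QuotientGroup.eq_one_iff x).2 (hNle hx)
  · intro r
    obtain ⟨u, rfl⟩ := QuotientGroup.mk'_surjective _ r
    exact ⟨QuotientGroup.mk' _ u, rfl⟩
  · ext q
    obtain ⟨u, rfl⟩ := QuotientGroup.mk'_surjective _ q
    constructor
    · intro h
      exact ⟨u, (QuotientGroup.eq_one_iff u).1 h, rfl⟩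
    · rintro ⟨x, hx, hxu⟩
      rw [← hxu]
      exact (QuotientGroup.eq_one_iff x).2 hx
  · have hne : ∀ (l : {l : Λ // l ∉ Υ}) (i : I l.1), baseOn A Υ ≤
        ⨆ j : Σ l : Λ, I l, ⨆ (_ : j ≠ ⟨l.1, i⟩), A j.1 j.2 := by
      intro l i
      refine iSup_le fun m => iSup_le fun hm => iSup_le fun j => ?_
      refine le_iSup₂_of_le (f := fun (j : Σ l : Λ, I l) (_ : j ≠ ⟨l.1, i⟩) => A j.1 j.2)
        ⟨m, j⟩ (fun h => l.2 ?_) le_rfl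
      rw [← show m = l.1 from congrArg Sigma.fst h]
      exact hm
    refine ⟨?_, ?_, ?_, ?_, ?_, ?_, ?_⟩
    · intro b
      obtain ⟨u, rfl⟩ := hU.surjective b
      exact ⟨QuotientGroup.mk' _ u, rfl⟩
    · rintro l i _ ⟨x, hx, rfl⟩
      exact hU.le_ker _ _ hx
    · rintro ⟨l, i⟩ ⟨m, j⟩ hpq _ ⟨x, hx, rfl⟩ _ ⟨y, hy, rfl⟩
      have h : x * y = y * x :=
        gwp_ker_comm hU x (hU.le_ker _ _ hx) y (hU.le_ker _ _ hy)
      rw [commute_iff_eq, ← map_mul, h, map_mul]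
    · rintro ⟨l, i⟩
      rw [Subgroup.disjoint_def]
      rintro _ ⟨x, hx, rfl⟩ hx'
      have h2 : (⨆ j : Σ l : {l : Λ // l ∉ Υ}, I l.1, ⨆ (_ : j ≠ ⟨l, i⟩),
          (A j.1.1 j.2).map (QuotientGroup.mk' (baseOn A Υ))) ≤
          (⨆ j : Σ l : Λ, I l, ⨆ (_ : j ≠ ⟨l.1, i⟩), A j.1 j.2).map
            (QuotientGroup.mk' (baseOn A Υ)) := by
        refine iSup_le fun j => iSup_le fun hj => Subgroup.map_mono ?_
        refine le_iSup₂_of_le (f := fun (j : Σ l : Λ, I l) (_ : j ≠ ⟨l.1, i⟩) => A j.1 j.2)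
          ⟨j.1.1, j.2⟩ (fun h => hj ?_) le_rfl
        obtain ⟨⟨m, hm⟩, j⟩ := j
        obtain ⟨l, hl⟩ := l
        simp only [Sigma.mk.injEq] at h
        obtain ⟨rfl, h⟩ := h
        obtain rfl := eq_of_heq h
        rfl
      obtain ⟨y, hy, hyx⟩ := h2 hx'
      have h3 : y⁻¹ * x ∈ baseOn A Υ := QuotientGroup.eq.1 hyx
      have h4 := mul_mem hy (hne l i h3)
      rw [mul_inv_cancel_left] at h4
      have h5 := Subgroup.disjoint_def.1 (hU.independent ⟨l.1, i⟩) (x := x) hx h4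
      rw [h5, map_one]
    · apply le_antisymm
      · refine iSup_le fun p => ?_
        rintro _ ⟨x, hx, rfl⟩
        exact hU.le_ker _ _ hx
      · intro r hr
        obtain ⟨u, rfl⟩ := QuotientGroup.mk'_surjective _ r
        have hu : u ∈ ε.ker := hr
        rw [← hU.iSup_eq_ker] at hu
        have : (⨆ p : Σ l : Λ, I l, A p.1 p.2) ≤
            (⨆ p : Σ l : {l : Λ // l ∉ Υ}, I l.1,
              (A p.1.1 p.2).map (QuotientGroup.mk' (baseOn A Υ))).comap
              (QuotientGroup.mk' (baseOn A Υ)) := by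
          refine iSup_le ?_
          rintro ⟨l, i⟩ x hx
          rw [Subgroup.mem_comap]
          by_cases hl : l ∈ Υ
          · have : QuotientGroup.mk' (baseOn A Υ) x = 1 :=
              (QuotientGroup.eq_one_iff x).2 (gwp_le_base hl i hx)
            rw [this]
            exact one_mem _
          · exact (le_iSup (fun p : Σ l : {l : Λ // l ∉ Υ}, I l.1 =>
              (A p.1.1 p.2).map (QuotientGroup.mk' (baseOn A Υ))) ⟨⟨l, hl⟩, i⟩) ⟨x, hx, rfl⟩
        exact this hu
    · intro r l i
      obtain ⟨u, rfl⟩ := QuotientGroup.mk'_surjective _ r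
      have h := hU.conj_eq u l.1 i
      change _ = (A l.1 (ε u • i)).map _
      rw [← h, Subgroup.map_map, Subgroup.map_map]
      congr 1
    · rintro l i r hr _ ⟨x, hx, rfl⟩
      obtain ⟨u, rfl⟩ := QuotientGroup.mk'_surjective _ r
      have h := (hU.untwisted l.1 i u hr x hx).eq
      rw [commute_iff_eq, ← map_mul, h, map_mul]
  · intro l i
    refine gwp_iso ((QuotientGroup.mk' (baseOn A Υ)).subgroupMap (A l.1 i)) (MonoidHom.id _)
      (MonoidHom.subgroupMap_surjective _ _) Function.surjective_id ?_
    have hne : baseOn A Υ ≤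
        ⨆ j : Σ l : Λ, I l, ⨆ (_ : j ≠ ⟨l.1, i⟩), A j.1 j.2 := by
      refine iSup_le fun m => iSup_le fun hm => iSup_le fun j => ?_
      refine le_iSup₂_of_le (f := fun (j : Σ l : Λ, I l) (_ : j ≠ ⟨l.1, i⟩) => A j.1 j.2)
        ⟨m, j⟩ (fun h => l.2 ?_) le_rfl
      rw [← show m = l.1 from congrArg Sigma.fst h]
      exact hm
    ext x
    constructor
    · intro hx
      have h1 : (x : U) ∈ baseOn A Υ :=
        (QuotientGroup.eq_one_iff (x : U)).1 (congrArg Subtype.val (MonoidHom.mem_ker.1 hx))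
      exact Subtype.ext
        (Subgroup.disjoint_def.1 (hU.independent ⟨l.1, i⟩) (x := (x : U)) x.2 (hne h1))
    · intro hx
      obtain rfl : x = 1 := hx
      exact one_mem _
end

section
/- For any group G with trivial abelianization (i.e. G equals its own commutator subgroup), there is an injective group homomorphism from Out(G) to Out(G/Z(G)), where the map sends the class of an automorphism α of G to the class of the automorphism of G/Z(G) induced by α. In particular, if Out(G/Z(G)) is trivial, then so is Out(G). -/
/-- The automorphism of `G/Z(G)` induced by an automorphism `α` of `G`,
sending `g·Z(G)` to `α(g)·Z(G)`. -/
def inducedCenterAut {G : Type*} [Group G] (α : G ≃* G) :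
    (G ⧸ Subgroup.center G) ≃* (G ⧸ Subgroup.center G) :=
  QuotientGroup.congr (Subgroup.center G) (Subgroup.center G) α
    (Subgroup.characteristic_iff_map_eq.mp inferInstance α)

/-- The subgroup of inner automorphisms is normal in `Aut G`, so that the outer automorphism
group `Out(G) = Aut(G)/Inn(G)` makes sense. -/
instance conjRangeNormal {G : Type*} [Group G] :
    ((MulAut.conj : G →* MulAut G).range).Normal := by
  constructor
  rintro x ⟨g, rfl⟩ f
  refine ⟨f g, ?_⟩
  ext y
  simp [MulAut.conj_apply, MulAut.mul_apply, MulAut.inv_def, mul_assoc]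

/-- For any group `G` with trivial abelianization there is an injective group
homomorphism from `Out(G)` to `Out(G/Z(G))`, sending the class of an automorphism `α` of `G`
to the class of the automorphism of `G/Z(G)` induced by `α`. (In particular, if
`Out(G/Z(G))` is trivial then so is `Out(G)`.) -/
theorem out_injective_into_out_central_quotient
    {G : Type*} [Group G] (hG : commutator G = ⊤) :
    ∃ f : (MulAut G ⧸ (MulAut.conj : G →* MulAut G).range) →*
        (MulAut (G ⧸ Subgroup.center G) ⧸
          (MulAut.conj : (G ⧸ Subgroup.center G) →* MulAut (G ⧸ Subgroup.center G)).range),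
      Function.Injective f ∧
      ∀ α : G ≃* G,
        f (QuotientGroup.mk' _ α) = QuotientGroup.mk' _ (inducedCenterAut α) := by
  let Φ : MulAut G →* MulAut (G ⧸ Subgroup.center G) :=
    { toFun := fun α => inducedCenterAut α
      map_one' := by
        ext x
        induction x using QuotientGroup.induction_on with
        | H x => rfl
      map_mul' := fun α β => by
        ext x
        induction x using QuotientGroup.induction_on with
        | H x => rfl }
  have hle : (MulAut.conj : G →* MulAut G).range ≤
      ((MulAut.conj : (G ⧸ Subgroup.center G) →*
        MulAut (G ⧸ Subgroup.center G)).range).comap Φ := by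
    rintro _ ⟨g, rfl⟩
    refine ⟨(g : G ⧸ Subgroup.center G), ?_⟩
    ext x
    induction x using QuotientGroup.induction_on with
    | H x => rfl
  refine ⟨QuotientGroup.map _ _ Φ hle, ?_, fun α => rfl⟩
  rw [injective_iff_map_eq_one]
  intro a
  induction a using QuotientGroup.induction_on with
  | H α =>
    intro h
    have h' : Φ α ∈ (MulAut.conj : (G ⧸ Subgroup.center G) →*
        MulAut (G ⧸ Subgroup.center G)).range := (QuotientGroup.eq_one_iff _).1 h
    obtain ⟨q, hq⟩ := h'
    induction q using QuotientGroup.induction_on with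
    | H g =>
      refine (QuotientGroup.eq_one_iff _).2 ⟨g, ?_⟩
      have key : ∀ x, ∃ z ∈ Subgroup.center G, α x = (MulAut.conj g x) * z := by
        intro x
        have e : ((MulAut.conj g x : G) : G ⧸ Subgroup.center G) = (α x : G) :=
          DFunLike.congr_fun hq (x : G ⧸ Subgroup.center G)
        exact ⟨_, QuotientGroup.eq.1 e, by group⟩
      have hcomm : commutator G ≤
          (MulAut.conj g).toMonoidHom.eqLocus (α : G ≃* G).toMonoidHom := by
        rw [commutator_def, Subgroup.commutator_le]
        intro x _ y _
        change MulAut.conj g (x * y * x⁻¹ * y⁻¹) = α (x * y * x⁻¹ * y⁻¹)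
        simp only [map_mul, map_inv]
        obtain ⟨z, hz, ez⟩ := key x
        obtain ⟨w, hw, ew⟩ := key y
        rw [ez, ew]
        generalize MulAut.conj g x = a
        generalize MulAut.conj g y = b
        rw [Subgroup.mem_center_iff] at hz hw
        symm
        calc (a * z) * (b * w) * (a * z)⁻¹ * (b * w)⁻¹ = a * (z * (b * w)) * z⁻¹ * a⁻¹ * w⁻¹ * b⁻¹ := by
              group
          _ = a * b * (w * a⁻¹) * w⁻¹ * b⁻¹ := by rw [← hz]; group
          _ = a * b * a⁻¹ * b⁻¹ := by rw [← hw]; group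
      ext x
      have : x ∈ commutator G := by rw [hG]; trivial
      exact hcomm this
end

section
/- Let G be a group equal to its own commutator subgroup, and suppose that every automorphism of G/Z(G) is inner. Then every automorphism of G is inner. -/
open scoped commutatorElement

theorem aux_comm {G : Type*} [Group G] (a b z w : G) (hz : z ∈ Subgroup.center G)
    (hw : w ∈ Subgroup.center G) : ⁅a * z, b * w⁆ = ⁅a, b⁆ := by
  rw [Subgroup.mem_center_iff] at hz hw
  have h1 : ∀ x, (a * z) * x * (a * z)⁻¹ = a * x * a⁻¹ := by
    intro x
    calc (a * z) * x * (a * z)⁻¹ = a * (z * x) * z⁻¹ * a⁻¹ := by group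
      _ = a * x * a⁻¹ := by rw [← hz x]; group
  have h2 : ∀ x, (b * w) * x * (b * w)⁻¹ = b * x * b⁻¹ := by
    intro x
    calc (b * w) * x * (b * w)⁻¹ = b * (w * x) * w⁻¹ * b⁻¹ := by group
      _ = b * x * b⁻¹ := by rw [← hw x]; group
  calc ⁅a * z, b * w⁆ = (a * z) * (b * w) * (a * z)⁻¹ * (b * w)⁻¹ := rfl
    _ = a * ((b * w) * a⁻¹ * (b * w)⁻¹) := by rw [h1]; group
    _ = ⁅a, b⁆ := by rw [h2, commutatorElement_def]; group

/-- Let `G` be a group equal to its own commutator subgroup, and suppose that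
every automorphism of `G/Z(G)` is inner. Then every automorphism of `G` is inner. -/
theorem aut_inner_of_central_quotient_aut_inner
    {G : Type*} [Group G] (hG : commutator G = ⊤)
    (h : ∀ β : (G ⧸ Subgroup.center G) ≃* (G ⧸ Subgroup.center G),
      ∃ q : G ⧸ Subgroup.center G, ∀ x, β x = q * x * q⁻¹) :
    ∀ α : G ≃* G, ∃ g : G, ∀ x, α x = g * x * g⁻¹ := by
  intro α
  obtain ⟨q, hq⟩ := h (QuotientGroup.congr _ _ α
    (Subgroup.characteristic_iff_map_eq.mp inferInstance α))
  obtain ⟨g, rfl⟩ := QuotientGroup.mk_surjective q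
  refine ⟨g, fun x => ?_⟩
  have key : ∀ x, (MulAut.conj g x)⁻¹ * α x ∈ Subgroup.center G := by
    intro x
    rw [← QuotientGroup.eq]
    exact (hq x).symm
  have hle : commutator G ≤ (α.toMonoidHom).eqLocus (MulAut.conj g).toMonoidHom := by
    rw [commutator_def, Subgroup.commutator_le]
    intro a _ b _
    change α ⁅a, b⁆ = MulAut.conj g ⁅a, b⁆
    rw [map_commutatorElement, map_commutatorElement,
      ← aux_comm (MulAut.conj g a) (MulAut.conj g b) _ _ (key a) (key b),
      mul_inv_cancel_left, mul_inv_cancel_left]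
  rw [hG] at hle
  exact hle (Subgroup.mem_top x)
end

section
/- Let G be a group and H ≤ G a Cohen–Lyndon subgroup of G, i.e. there exists a left transversal T of the normal closure ⟪H⟫ of H in G such that the conjugate subgroups {t H t⁻¹ : t ∈ T} generate ⟪H⟫ and the canonical homomorphism from the free product ∗_{t∈T} (t H t⁻¹) to G (induced by the inclusions) is injective. Suppose in addition that H is the internal free product of a family of subgroups (H_λ)_{λ∈Λ}: the H_λ are subgroups of H that generate H, and the canonical homomorphism from the free product ∗_{λ∈Λ} H_λ to G induced by the inclusions is injective with image H. Then the family (H_λ)_{λ∈Λ} has the Cohen–Lyndon property in G: writing N = ⟪⋃_{λ∈Λ} H_λ⟫ = ⟪H⟫, for each λ ∈ Λ there exists a left transversal T_λ of the subgroup generated by H_λ and N in G such that the conjugates {t H_λ t⁻¹ : λ ∈ Λ, t ∈ T_λ} generate N and the canonical homomorphism from the free product ∗_{λ∈Λ, t∈T_λ} (t H_λ t⁻¹) to G induced by the inclusions is injective. -/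
/-- `T` is a left transversal of the subgroup `K` in `G`: it intersects every left coset of
`K` exactly once. -/
def IsLeftTransversal {G : Type*} [Group G] (T : Set G) (K : Subgroup G) : Prop :=
  ∀ g : G, ∃! t : G, t ∈ T ∧ t⁻¹ * g ∈ K

/-- The conjugate subgroup `t H t⁻¹`. -/
def conjSubgroup {G : Type*} [Group G] (t : G) (H : Subgroup G) : Subgroup G :=
  H.map (MulAut.conj t).toMonoidHom

theorem aux_section {G : Type*} [Group G] (H : Subgroup G) {Λ : Type*} (Hf : Λ → Subgroup G)
    (hgen : (⨆ l : Λ, Hf l) = H)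
    (hfree : Function.Injective (Monoid.CoprodI.lift fun l : Λ => (Hf l).subtype)) :
    ∃ s : H →* Monoid.CoprodI (fun l : Λ => Hf l), ∀ (l : Λ) (x : Hf l) (hx : (x : G) ∈ H),
      s ⟨x, hx⟩ = Monoid.CoprodI.of (M := fun l : Λ => Hf l) x := by
  have hr : H = (Monoid.CoprodI.lift fun l : Λ => (Hf l).subtype).range := by
    rw [Monoid.CoprodI.range_eq_iSup, ← hgen]
    simp
  refine ⟨(MonoidHom.ofInjective hfree).symm.toMonoidHom.comp
    (Subgroup.inclusion hr.le), fun l x hx => ?_⟩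
  show (MonoidHom.ofInjective hfree).symm _ = _
  rw [MulEquiv.symm_apply_eq]
  apply Subtype.ext
  exact (Monoid.CoprodI.lift_of (fun l : Λ => (Hf l).subtype) x).symm

theorem mem_conj_iff {G : Type*} [Group G] (t : G) (H : Subgroup G) (g : G) :
    g ∈ conjSubgroup t H ↔ t⁻¹ * g * t ∈ H := by
  unfold conjSubgroup
  constructor
  · rintro ⟨h, hh, rfl⟩
    simpa [mul_assoc] using hh
  · intro h
    exact ⟨_, h, by simp [mul_assoc]⟩

/-- conjugation by the inverse, back to the subgroup -/
def unconj {G : Type*} [Group G] (t : G) (H : Subgroup G) : conjSubgroup t H →* H where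
  toFun g := ⟨t⁻¹ * g * t, (mem_conj_iff t H g).1 g.2⟩
  map_one' := by apply Subtype.ext; simp
  map_mul' a b := by apply Subtype.ext; simp [mul_assoc]

/-- conjugation of a subgroup -/
def doconj {G : Type*} [Group G] (t : G) (H : Subgroup G) : H →* conjSubgroup t H where
  toFun g := ⟨t * g * t⁻¹, (mem_conj_iff t H _).2 (by simp [mul_assoc])⟩
  map_one' := by apply Subtype.ext; simp
  map_mul' a b := by apply Subtype.ext; simp [mul_assoc]

/-- Let `H ≤ G` be a Cohen–Lyndon subgroup of `G` (there is a left
transversal `T` of the normal closure `⟪H⟫` such that the conjugates `{tHt⁻¹ : t ∈ T}`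
generate `⟪H⟫` and the canonical map from their free product to `G` is injective). If `H` is
the internal free product of a family of subgroups `(H_l)`, then the family `(H_l)` has the
Cohen–Lyndon property in `G`. -/
theorem cohenLyndon_of_internal_free_product
    {G : Type*} [Group G] (H : Subgroup G) {Λ : Type*} (Hf : Λ → Subgroup G)
    (hle : ∀ l : Λ, Hf l ≤ H)
    (hgen : (⨆ l : Λ, Hf l) = H)
    (hfree : Function.Injective (Monoid.CoprodI.lift fun l : Λ => (Hf l).subtype))
    (T : Set G) (hT : IsLeftTransversal T (Subgroup.normalClosure (H : Set G)))
    (hTgen : (⨆ t : T, conjSubgroup (t : G) H) = Subgroup.normalClosure (H : Set G))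
    (hTinj : Function.Injective
      (Monoid.CoprodI.lift fun t : T => (conjSubgroup (t : G) H).subtype)) :
    ∃ Tl : Λ → Set G,
      (∀ l : Λ, IsLeftTransversal (Tl l)
        (Hf l ⊔ Subgroup.normalClosure (⋃ l' : Λ, (Hf l' : Set G)))) ∧
      (⨆ p : Σ l : Λ, Tl l, conjSubgroup (p.2 : G) (Hf p.1))
        = Subgroup.normalClosure (⋃ l' : Λ, (Hf l' : Set G)) ∧
      Function.Injective
        (Monoid.CoprodI.lift
          fun p : Σ l : Λ, Tl l => (conjSubgroup (p.2 : G) (Hf p.1)).subtype) := by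
  have hN : Subgroup.normalClosure (⋃ l' : Λ, (Hf l' : Set G))
      = Subgroup.normalClosure (H : Set G) := by
    apply le_antisymm
    · apply Subgroup.normalClosure_mono
      exact Set.iUnion_subset fun l => hle l
    · apply Subgroup.normalClosure_le_normal
      show H ≤ _
      conv_lhs => rw [← hgen]
      exact iSup_le fun l x hx =>
        Subgroup.subset_normalClosure (Set.mem_iUnion.2 ⟨l, hx⟩)
  have hmono : ∀ (t : G) (l : Λ), conjSubgroup t (Hf l) ≤ conjSubgroup t H := fun t l =>
    Subgroup.map_mono (hle l)
  rw [hN]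
  refine ⟨fun _ => T, fun l => ?_, ?_, ?_⟩
  · rw [sup_eq_right.2 ((hle l).trans Subgroup.subset_normalClosure)]
    exact hT
  · rw [← hTgen, iSup_sigma, iSup_comm]
    refine iSup_congr fun t => ?_
    show (⨆ l : Λ, (Hf l).map (MulAut.conj (t : G)).toMonoidHom) = H.map _
    rw [← Subgroup.map_iSup, hgen]
  · obtain ⟨s, hs⟩ := aux_section H Hf hgen hfree
    let φ : Monoid.CoprodI (fun p : Σ _ : Λ, T => conjSubgroup (p.2 : G) (Hf p.1)) →*
        Monoid.CoprodI (fun t : T => conjSubgroup (t : G) H) :=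
      Monoid.CoprodI.lift fun p =>
        (Monoid.CoprodI.of (M := fun t : T => conjSubgroup (t : G) H) (i := p.2)).comp
          (Subgroup.inclusion (hmono p.2 p.1))
    let ψ : Monoid.CoprodI (fun t : T => conjSubgroup (t : G) H) →*
        Monoid.CoprodI (fun p : Σ _ : Λ, T => conjSubgroup (p.2 : G) (Hf p.1)) :=
      Monoid.CoprodI.lift fun t =>
        ((Monoid.CoprodI.lift fun l : Λ =>
          (Monoid.CoprodI.of (M := fun p : Σ _ : Λ, T => conjSubgroup (p.2 : G) (Hf p.1))
            (i := ⟨l, t⟩)).comp (doconj (t : G) (Hf l))).comp s).comp (unconj (t : G) H)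
    have h1 : ψ.comp φ = MonoidHom.id _ := by
      apply Monoid.CoprodI.ext_hom
      rintro ⟨l, t⟩
      ext x
      have hx := (mem_conj_iff (t : G) (Hf l) x).1 x.2
      have h2 := hs l ⟨_, hx⟩ (hle l hx)
      simp only [φ, ψ, MonoidHom.comp_apply, Monoid.CoprodI.lift_of, MonoidHom.id_apply]
      have h3 : unconj (t : G) H (Subgroup.inclusion (hmono t l) x) = ⟨_, hle l hx⟩ := rfl
      rw [h3, h2, Monoid.CoprodI.lift_of, MonoidHom.comp_apply]
      congr 1
      apply Subtype.ext
      simp [doconj, mul_assoc]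
    have h4 : (Monoid.CoprodI.lift
          fun p : Σ _ : Λ, T => (conjSubgroup (p.2 : G) (Hf p.1)).subtype)
        = (Monoid.CoprodI.lift fun t : T => (conjSubgroup (t : G) H).subtype).comp φ := by
      apply Monoid.CoprodI.ext_hom
      rintro ⟨l, t⟩
      ext x
      simp [φ]
    have h5 : Function.Injective φ :=
      Function.LeftInverse.injective (g := ψ) fun x => DFunLike.congr_fun h1 x
    show Function.Injective (Monoid.CoprodI.lift
          fun p : Σ _ : Λ, T => (conjSubgroup (p.2 : G) (Hf p.1)).subtype)
    rw [h4]
    exact hTinj.comp h5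
end

section
/- Let W and B be groups, ε : W → B a surjective homomorphism, Λ an index set, and for each λ ∈ Λ and b ∈ B a subgroup A_{λ,b} ≤ W, such that: (i) each A_{λ,b} is contained in ker ε; (ii) any element of A_{λ,b} commutes with any element of A_{μ,c} whenever (λ,b) ≠ (μ,c); (iii) the family of subgroups (A_{λ,b}) is independent (iSupIndep) and its supremum equals ker ε; (iv) w·A_{λ,b}·w⁻¹ = A_{λ, ε(w)b} for all w ∈ W, λ ∈ Λ, b ∈ B. For each λ ∈ Λ let N_λ be a normal subgroup of A_{λ,1}, and let M be the normal closure in W of ⋃_{λ∈Λ} N_λ. Then M ≤ ker ε, so ε induces a surjective homomorphism δ : W/M → B; and writing q : W → W/M for the quotient map, the images q(A_{λ,b}) satisfy the analogues of (i)–(iv) with respect to δ (each q(A_{λ,b}) ≤ ker δ; elements of q(A_{λ,b}) and q(A_{μ,c}) commute for distinct index pairs; the family (q(A_{λ,b})) is independent with supremum ker δ; q(w)·q(A_{λ,b})·q(w)⁻¹ = q(A_{λ, ε(w)b})), and each q(A_{λ,b}) is isomorphic to the quotient group A_{λ,1}/N_λ. -/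
/-- The normal closure in `W` of the union of a family of subgroups. -/
def unionNormalClosure {W : Type*} [Group W] {Λ : Type*} (N : Λ → Subgroup W) : Subgroup W :=
  Subgroup.normalClosure (⋃ l : Λ, (N l : Set W))

instance unionNormalClosure_normal {W : Type*} [Group W] {Λ : Type*} (N : Λ → Subgroup W) :
    (unionNormalClosure N).Normal :=
  Subgroup.normalClosure_normal

/-- Let `W`, `B` be groups, `ε : W → B` a surjective homomorphism and
`A : Λ → B → Subgroup W` subgroups satisfying the axioms (i)–(iv) of a regular generalized
wreath-like product.  For each `l` let `N l` be a normal subgroup of `A l 1`, and let `M` be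
the normal closure in `W` of `⋃ l, N l`.  Then `M ≤ ker ε`, so `ε` induces a surjective
homomorphism `δ : W/M → B`, the images of the `A l b` in `W/M` satisfy the analogues of
(i)–(iv) with respect to `δ`, and each image is isomorphic to `A l 1 / N l`. -/
theorem regular_gwp_quotient_by_normal_subgroups
    {W B : Type*} [Group W] [Group B] {Λ : Type*}
    (ε : W →* B) (hsurj : Function.Surjective ε)
    (A : Λ → B → Subgroup W)
    (hker : ∀ (l : Λ) (b : B), A l b ≤ ε.ker)
    (hcomm : ∀ p q : Λ × B, p ≠ q → ∀ x ∈ A p.1 p.2, ∀ y ∈ A q.1 q.2, Commute x y)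
    (hindep : iSupIndep fun p : Λ × B => A p.1 p.2)
    (hsup : (⨆ p : Λ × B, A p.1 p.2) = ε.ker)
    (hconj : ∀ (w : W) (l : Λ) (b : B),
      (A l b).map (MulAut.conj w).toMonoidHom = A l (ε w * b))
    (N : Λ → Subgroup W) (hNle : ∀ l : Λ, N l ≤ A l 1)
    [hNnorm : ∀ l : Λ, ((N l).subgroupOf (A l 1)).Normal] :
    unionNormalClosure N ≤ ε.ker ∧
    ∃ δ : (W ⧸ unionNormalClosure N) →* B,
      Function.Surjective δ ∧
      (∀ w : W, δ (QuotientGroup.mk' (unionNormalClosure N) w) = ε w) ∧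
      (∀ (l : Λ) (b : B), (A l b).map (QuotientGroup.mk' (unionNormalClosure N)) ≤ δ.ker) ∧
      (∀ p q : Λ × B, p ≠ q →
        ∀ x ∈ (A p.1 p.2).map (QuotientGroup.mk' (unionNormalClosure N)),
        ∀ y ∈ (A q.1 q.2).map (QuotientGroup.mk' (unionNormalClosure N)), Commute x y) ∧
      iSupIndep (fun p : Λ × B => (A p.1 p.2).map (QuotientGroup.mk' (unionNormalClosure N))) ∧
      (⨆ p : Λ × B, (A p.1 p.2).map (QuotientGroup.mk' (unionNormalClosure N))) = δ.ker ∧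
      (∀ (w : W) (l : Λ) (b : B),
        ((A l b).map (QuotientGroup.mk' (unionNormalClosure N))).map
            (MulAut.conj (QuotientGroup.mk' (unionNormalClosure N) w)).toMonoidHom
          = (A l (ε w * b)).map (QuotientGroup.mk' (unionNormalClosure N))) ∧
      ∀ (l : Λ) (b : B),
        Nonempty
          (((A l b).map (QuotientGroup.mk' (unionNormalClosure N)))
            ≃* (↥(A l 1) ⧸ (N l).subgroupOf (A l 1))) := by
  classical
  set M := unionNormalClosure N with hM
  set q := QuotientGroup.mk' M with hq
  have hNM : ∀ l, N l ≤ M := fun l x hx =>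
    Subgroup.subset_normalClosure (Set.mem_iUnion.2 ⟨l, hx⟩)
  have hMker : M ≤ ε.ker := by
    refine Subgroup.normalClosure_le_normal ?_
    intro x hx
    obtain ⟨l, hl⟩ := Set.mem_iUnion.1 hx
    exact hker l 1 (hNle l hl)
  have hcA : ∀ (w : W) (l : Λ) (b : B) (x : W), x ∈ A l b → w * x * w⁻¹ ∈ A l (ε w * b) := by
    intro w l b x hx
    rw [← hconj]
    exact ⟨x, hx, by simp⟩
  -- the kernel normalizes each `N l`
  have hnorm : ∀ l, ∀ k ∈ ε.ker, ∀ n ∈ N l, k * n * k⁻¹ ∈ N l := by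
    intro l k hk
    rw [← hsup] at hk
    induction hk using Subgroup.iSup_induction' with
    | hp p x hx =>
      intro n hn
      by_cases hp : p = (l, 1)
      · subst hp
        have := (hNnorm l).conj_mem ⟨n, hNle l hn⟩ (by simpa [Subgroup.mem_subgroupOf] using hn)
          ⟨x, hx⟩
        simpa [Subgroup.mem_subgroupOf] using this
      · have := hcomm p (l, 1) hp x hx n (hNle l hn)
        rw [this.eq]; simpa using hn
    | h1 => intro n hn; simpa using hn
    | hmul x y _ _ hx hy =>
      intro n hn
      have := hx _ (hy n hn)
      simpa [mul_assoc] using this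
  choose s hs using hsurj
  -- the conjugates
  have hMle : ∀ p : Λ × B, M ≤ (N p.1).map (MulAut.conj (s p.2)).toMonoidHom ⊔
      ⨆ (j) (_ : j ≠ p), A j.1 j.2 := by
    intro p
    rw [hM, unionNormalClosure, Subgroup.normalClosure, Subgroup.closure_le]
    intro x hx
    obtain ⟨n, hn, hc⟩ := Group.mem_conjugatesOfSet_iff.1 hx
    obtain ⟨l, hl⟩ := Set.mem_iUnion.1 hn
    obtain ⟨w, rfl⟩ := isConj_iff.1 hc
    by_cases h : (l, ε w) = p
    · subst h
      refine Subgroup.mem_sup_left ⟨((s (ε w))⁻¹ * w) * n * ((s (ε w))⁻¹ * w)⁻¹,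
        hnorm l _ ?_ n hl, ?_⟩
      · simp [MonoidHom.mem_ker, hs]
      · simp [mul_assoc]
    · refine Subgroup.mem_sup_right ?_
      have h1 : A l (ε w) ≤ ⨆ (j) (_ : j ≠ p), A j.1 j.2 :=
        le_iSup₂_of_le (f := fun (j : Λ × B) (_ : j ≠ p) => A j.1 j.2) (l, ε w) h le_rfl
      apply h1
      have := hcA w l 1 n (hNle l hl)
      rwa [mul_one] at this
  have hN'A : ∀ p : Λ × B, (N p.1).map (MulAut.conj (s p.2)).toMonoidHom ≤ A p.1 p.2 := by
    rintro p _ ⟨n, hn, rfl⟩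
    have := hcA (s p.2) p.1 1 n (hNle _ hn)
    rw [hs, mul_one] at this
    simpa using this
  have hN'M : ∀ p : Λ × B, (N p.1).map (MulAut.conj (s p.2)).toMonoidHom ≤ M := by
    rintro p _ ⟨n, hn, rfl⟩
    simpa using (unionNormalClosure_normal N).conj_mem n (hNM _ hn) (s p.2)
  have key : ∀ p : Λ × B, ∀ x ∈ A p.1 p.2, x ∈ M ⊔ (⨆ (j) (_ : j ≠ p), A j.1 j.2) →
      x ∈ (N p.1).map (MulAut.conj (s p.2)).toMonoidHom := by
    intro p x hx hx2
    have hx3 := (sup_le (hMle p) le_sup_right : _ ≤ _) hx2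
    have hCle : (⨆ (j) (_ : j ≠ p), A j.1 j.2) ≤ Subgroup.centralizer (A p.1 p.2 : Set W) := by
      refine iSup₂_le fun j hj y hy => ?_
      rw [Subgroup.mem_centralizer_iff]
      intro z hz
      exact (hcomm p j hj.symm z hz y hy).eq
    have hle : (N p.1).map (MulAut.conj (s p.2)).toMonoidHom ≤
        Subgroup.normalizer ((⨆ (j) (_ : j ≠ p), A j.1 j.2 : Subgroup W) : Set W) := by
      intro y hy
      rw [Subgroup.mem_normalizer_iff]
      have hyA := hN'A p hy
      have h1 : ∀ z, z ∈ (⨆ (j) (_ : j ≠ p), A j.1 j.2 : Subgroup W) → y * z = z * y :=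
        fun z hz => Subgroup.mem_centralizer_iff.1 (hCle hz) y hyA
      intro z
      constructor
      · intro hz
        rw [h1 z hz]; simpa using hz
      · intro hz
        have := h1 _ hz
        have h2 : z = y * z * y⁻¹ := by
          have h3 : y * (y * z * y⁻¹) = y * z := by rw [this]; group
          exact (mul_left_cancel h3).symm
        rw [h2]; exact hz
    rw [← SetLike.mem_coe, Subgroup.coe_mul_of_left_le_normalizer_right _ _ hle] at hx3
    obtain ⟨n, hn, c, hc, rfl⟩ := hx3
    have hcA' : c ∈ A p.1 p.2 := by
      have := mul_mem (inv_mem (hN'A p hn)) hx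
      simpa using this
    have : c = 1 := Subgroup.disjoint_def.1 (hindep p) hcA' hc
    subst this
    simpa using hn
  have hqker : ∀ x, q x = 1 ↔ x ∈ M := fun x => QuotientGroup.eq_one_iff x
  refine ⟨hMker, QuotientGroup.lift M ε (fun x hx => hMker hx), ?_, ?_, ?_, ?_, ?_, ?_, ?_, ?_⟩
  · intro b
    exact ⟨q (s b), hs b⟩
  · intro w; rfl
  · rintro l b _ ⟨x, hx, rfl⟩
    exact hker l b hx
  · rintro p r hpr _ ⟨x, hx, rfl⟩ _ ⟨y, hy, rfl⟩
    exact (hcomm p r hpr x hx y hy).map q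
  · intro p
    rw [Subgroup.disjoint_def]
    rintro _ ⟨x, hx, rfl⟩ h
    simp only [← Subgroup.map_iSup] at h
    obtain ⟨c, hc, hcx⟩ := h
    rw [hqker]
    refine hN'M p (key p x hx ?_)
    have h1 : x * c⁻¹ ∈ M := by rw [← hqker, map_mul, map_inv, hcx, mul_inv_cancel]
    have := mul_mem (Subgroup.mem_sup_left h1) (Subgroup.mem_sup_right (S := M) hc)
    simpa using this
  · rw [← Subgroup.map_iSup, hsup]
    ext y
    obtain ⟨y, rfl⟩ := QuotientGroup.mk'_surjective M y
    constructor
    · rintro ⟨x, hx, hxy⟩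
      rw [← hxy]; exact hx
    · intro hy
      exact ⟨y, hy, rfl⟩
  · intro w l b
    rw [← hconj w l b, Subgroup.map_map, Subgroup.map_map]
    congr 1
  · intro l b
    let f : A l 1 →* (A l b).map q :=
      ((q.comp (MulAut.conj (s b)).toMonoidHom).comp (A l 1).subtype).codRestrict _ (by
        intro a
        refine ⟨_, ?_, rfl⟩
        have := hcA (s b) l 1 a a.2
        rw [hs, mul_one] at this
        simpa using this)
    have hf : Function.Surjective f := by
      rintro ⟨_, x, hx, rfl⟩
      have hx' := hx
      have h1 := hconj (s b) l 1
      rw [hs, mul_one] at h1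
      rw [← h1] at hx'
      obtain ⟨a, ha, rfl⟩ := hx'
      exact ⟨⟨a, ha⟩, rfl⟩
    have hfk : f.ker = (N l).subgroupOf (A l 1) := by
      ext a
      rw [MonoidHom.mem_ker, Subgroup.mem_subgroupOf]
      have h0 : f a = 1 ↔ s b * a * (s b)⁻¹ ∈ M := by
        rw [← hqker, Subtype.ext_iff]; rfl
      rw [h0]
      constructor
      · intro h
        have hA := hcA (s b) l 1 a a.2
        rw [hs, mul_one] at hA
        obtain ⟨n, hn, hna⟩ := key (l, b) _ hA (Subgroup.mem_sup_left h)
        have : n = a := by simpa using hna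
        rwa [← this]
      · intro h
        exact (unionNormalClosure_normal N).conj_mem _ (hNM l h) _
    exact ⟨((QuotientGroup.quotientMulEquivOfEq hfk.symm).trans
      (QuotientGroup.quotientKerEquivOfSurjective f hf)).symm⟩
end

section
/- Let G be a group, Z a subgroup of the center of G, and ε : G → W a surjective group homomorphism with kernel Z. Let σ : W → G be a set-theoretic section of ε (i.e. ε ∘ σ = id_W), and define c : W × W → Z by c(g,h) = σ(g)σ(h)σ(gh)⁻¹ (which indeed lies in Z). Let W₀ ≤ W be a subgroup of finite index, and assume that the abelianization of the subgroup ε⁻¹(W₀) of G is finite (this holds, for instance, when G has property (T)). Then the subgroup of G generated by σ(W₀) together with {c(g,h) : g, h ∈ W₀} has finite index in G. -/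
/-- Let `G` be a group, `Z` a subgroup of the center of `G`, and `ε : G → W`
a surjective group homomorphism with kernel `Z`. Let `σ : W → G` be a set-theoretic section of
`ε`, and define `c : W × W → Z` by `c(g,h) = σ(g)σ(h)σ(gh)⁻¹` (which indeed lies in `Z`). Let
`W₀ ≤ W` be a subgroup of finite index, and assume that the abelianization of the subgroup
`ε⁻¹(W₀)` of `G` is finite. Then the subgroup of `G` generated by `σ(W₀)` together with
`{c(g,h) : g, h ∈ W₀}` has finite index in `G`. -/
theorem closure_section_and_cocycle_finiteIndex
    {G W : Type*} [Group G] [Group W] (Z : Subgroup G) (hZ : Z ≤ Subgroup.center G)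
    (ε : G →* W) (hsurj : Function.Surjective ε) (hker : ε.ker = Z)
    (σ : W → G) (hσ : ∀ w : W, ε (σ w) = w)
    (c : W → W → G) (hc : ∀ g h : W, c g h = σ g * σ h * (σ (g * h))⁻¹)
    (hcZ : ∀ g h : W, c g h ∈ Z)
    (W₀ : Subgroup W) (hfi : W₀.FiniteIndex)
    (hab : Finite (Abelianization (W₀.comap ε))) :
    (Subgroup.closure
        (σ '' (W₀ : Set W) ∪ {x : G | ∃ g ∈ W₀, ∃ h ∈ W₀, x = c g h})).FiniteIndex := by
  set H := Subgroup.closure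
        (σ '' (W₀ : Set W) ∪ {x : G | ∃ g ∈ W₀, ∃ h ∈ W₀, x = c g h}) with hH
  have hs : ∀ w ∈ W₀, σ w ∈ H := fun w hw =>
    Subgroup.subset_closure (Or.inl ⟨w, hw, rfl⟩)
  have hle : H ≤ W₀.comap ε := by
    rw [hH, Subgroup.closure_le]
    rintro x (⟨w, hw, rfl⟩ | ⟨g, hg, h, hh, rfl⟩)
    · simpa [hσ] using hw
    · have h1 := hcZ g h
      rw [← hker, MonoidHom.mem_ker] at h1
      simp [h1, W₀.one_mem]
  have hdec : ∀ a : G, ∃ z ∈ Subgroup.center G, a = z * σ (ε a) := by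
    intro a
    refine ⟨a * (σ (ε a))⁻¹, hZ ?_, by group⟩
    rw [← hker, MonoidHom.mem_ker]
    simp [hσ]
  have hcomm : commutator (W₀.comap ε) ≤ H.subgroupOf (W₀.comap ε) := by
    rw [commutator_def, Subgroup.commutator_le]
    rintro ⟨a, ha⟩ - ⟨b, hb⟩ -
    rw [Subgroup.mem_subgroupOf]
    change a * b * a⁻¹ * b⁻¹ ∈ H
    have hsa := hs _ (Subgroup.mem_comap.1 ha)
    have hsb := hs _ (Subgroup.mem_comap.1 hb)
    obtain ⟨z, hz, hza⟩ := hdec a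
    obtain ⟨y, hy, hyb⟩ := hdec b
    generalize σ (ε a) = s at *
    generalize σ (ε b) = t at *
    rw [Subgroup.mem_center_iff] at hz hy
    have key : a * b * a⁻¹ * b⁻¹ = s * t * s⁻¹ * t⁻¹ := by
      have e1 : a * b = s * t * (z * y) := by
        rw [hza, hyb, ← hz s, ← hy t, mul_assoc s z, ← mul_assoc z t y, ← hz t]
        group
      have e2 : b * a = t * s * (z * y) := by
        rw [hza, hyb, ← hz s, ← hy t, mul_assoc t y, ← mul_assoc y s z, ← hy s]
        have := hz y
        simp only [mul_assoc, this]
      have : a * b * a⁻¹ * b⁻¹ = (a * b) * (b * a)⁻¹ := by group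
      rw [this, e1, e2]
      group
    rw [key]
    exact H.mul_mem (H.mul_mem (H.mul_mem hsa hsb) (H.inv_mem hsa)) (H.inv_mem hsb)
  have hf : (commutator (W₀.comap ε)).FiniteIndex := by
    have : Finite (W₀.comap ε ⧸ commutator (W₀.comap ε)) := hab
    exact Subgroup.finiteIndex_of_finite_quotient
  have h1 : (H.subgroupOf (W₀.comap ε)).FiniteIndex := Subgroup.finiteIndex_of_le hcomm
  have h2 : (W₀.comap ε).FiniteIndex :=
    ⟨by rw [Subgroup.index_comap_of_surjective _ hsurj]; exact hfi.index_ne_zero⟩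
  refine ⟨?_⟩
  rw [← Subgroup.relIndex_mul_index hle]
  exact mul_ne_zero h1.index_ne_zero h2.index_ne_zero
end

section
/- Let G be a group and c : G × G → 𝕋 a map with values in the circle group satisfying the 2-cocycle identity c(g,h)·c(gh,k) = c(h,k)·c(g,hk) for all g,h,k ∈ G, and c(1,1) = 1. Then there exists a map f : G → 𝕋 with f(1) = 1 and f(g) = f(g⁻¹) for all g, such that the cohomologous map c'(g,h) := c(g,h)·f(g)·f(h)·f(gh)⁻¹ again satisfies the 2-cocycle identity and moreover c'(g,g⁻¹) = 1 for all g ∈ G. -/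
/-- Let `G` be a group and `c : G × G → 𝕋` a circle-valued 2-cocycle with
`c(1,1) = 1`. Then there exists `f : G → 𝕋` with `f(1) = 1` and `f(g) = f(g⁻¹)` for all `g`,
such that the cohomologous map `c'(g,h) := c(g,h)·f(g)·f(h)·f(gh)⁻¹` again satisfies the
2-cocycle identity and moreover `c'(g,g⁻¹) = 1` for all `g ∈ G`. -/
theorem exists_normalization_of_cocycle
    {G : Type*} [Group G] (c : G → G → Circle)
    (hc : ∀ g h k : G, c g h * c (g * h) k = c h k * c g (h * k))
    (h1 : c 1 1 = 1) :
    ∃ f : G → Circle, f 1 = 1 ∧ (∀ g : G, f g = f g⁻¹) ∧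
      (∀ g h k : G,
        (c g h * f g * f h * (f (g * h))⁻¹) * (c (g * h) k * f (g * h) * f k * (f (g * h * k))⁻¹)
          = (c h k * f h * f k * (f (h * k))⁻¹) *
            (c g (h * k) * f g * f (h * k) * (f (g * (h * k)))⁻¹)) ∧
      (∀ g : G, c g g⁻¹ * f g * f g⁻¹ * (f (g * g⁻¹))⁻¹ = 1) := by
  have hl : ∀ g, c 1 g = 1 := fun g => by
    have h := hc 1 1 g
    simp only [one_mul, h1] at h
    exact (mul_eq_left.mp h.symm)
  have hr : ∀ g, c g 1 = 1 := fun g => by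
    have h := hc g 1 1
    simp only [mul_one, h1, one_mul] at h
    exact (mul_eq_left.mp h)
  have hs : ∀ g, c g g⁻¹ = c g⁻¹ g := fun g => by
    have h := hc g g⁻¹ g
    simpa [hl, hr] using h
  let s : Circle → Circle := fun z => Circle.exp (Complex.arg z / 2)
  have s1 : s 1 = 1 := by simp [s]
  have s2 : ∀ z, s z * s z = z := fun z => by
    simp only [s]
    rw [← Circle.exp_add, add_halves, Circle.exp_arg]
  have hf : ∀ g, s (c g g⁻¹) = s (c g⁻¹ g⁻¹⁻¹) := fun g => by rw [inv_inv, hs g]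
  refine ⟨fun g => (s (c g g⁻¹))⁻¹, by simp [h1, s1], fun g => ?_, fun g h k => ?_, fun g => ?_⟩
  · simp only
    rw [hf g]
  · generalize (fun g => (s (c g g⁻¹))⁻¹) = f
    have e := hc g h k
    rw [mul_assoc g h k]
    calc _ = (c g h * c (g * h) k) * (f g * f h * f k * (f (g * (h * k)))⁻¹)
            * (f (g * h) * (f (g * h))⁻¹) := by
          simp only [mul_comm, mul_left_comm, mul_assoc]
      _ = (c h k * c g (h * k)) * (f g * f h * f k * (f (g * (h * k)))⁻¹)
            * (f (h * k) * (f (h * k))⁻¹) := by rw [e, mul_inv_cancel, mul_inv_cancel]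
      _ = _ := by simp only [mul_comm, mul_left_comm, mul_assoc]
  · simp only
    rw [← hf g, mul_inv_cancel]
    simp only [inv_one, h1, s1, mul_one]
    rw [mul_assoc, ← mul_inv, s2, mul_inv_cancel]
end

section
/- Let W and B be groups, ε : W → B a surjective homomorphism, Λ an index set, and for each λ ∈ Λ and b ∈ B a subgroup A_{λ,b} ≤ W, such that: (i) each A_{λ,b} is contained in ker ε; (ii) any element of A_{λ,b} commutes with any element of A_{μ,c} whenever (λ,b) ≠ (μ,c); (iii) the subgroups A_{λ,b} together generate ker ε; (iv) w·A_{λ,b}·w⁻¹ = A_{λ, ε(w)b} for all w ∈ W, λ ∈ Λ, b ∈ B. Fix λ₀ ∈ Λ and let N be a normal subgroup of A_{λ₀,1}. Then: (1) N is a normal subgroup of ker ε; and (2) for any u, v ∈ W with ε(u) = ε(v), one has u·N·u⁻¹ = v·N·v⁻¹, so the conjugate u·N·u⁻¹ depends only on ε(u). -/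
/-- Let `W`, `B` be groups, `ε : W → B` surjective, `Λ` an index set, and for
each `λ ∈ Λ`, `b ∈ B` a subgroup `A λ b ≤ W` satisfying conditions (i)–(iv) of a regular
generalized wreath-like product (with (iii) weakened to generation). Fix `l₀ ∈ Λ` and let `N`
be a normal subgroup of `A l₀ 1`. Then (1) `N` is a normal subgroup of `ker ε`; and (2) for any
`u, v ∈ W` with `ε u = ε v`, one has `u·N·u⁻¹ = v·N·v⁻¹`. -/
theorem conj_of_normal_in_base_depends_only_on_image
    {W B : Type*} [Group W] [Group B] {Λ : Type*}
    (ε : W →* B) (hsurj : Function.Surjective ε)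
    (A : Λ → B → Subgroup W)
    (hker : ∀ (l : Λ) (b : B), A l b ≤ ε.ker)
    (hcomm : ∀ p q : Λ × B, p ≠ q → ∀ x ∈ A p.1 p.2, ∀ y ∈ A q.1 q.2, Commute x y)
    (hgen : (⨆ p : Λ × B, A p.1 p.2) = ε.ker)
    (hconj : ∀ (w : W) (l : Λ) (b : B),
      (A l b).map (MulAut.conj w).toMonoidHom = A l (ε w * b))
    (l₀ : Λ) (N : Subgroup W) (hN : N ≤ A l₀ 1)
    (hNnorm : ∀ a ∈ A l₀ 1, ∀ n ∈ N, a * n * a⁻¹ ∈ N) :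
    (∀ k ∈ ε.ker, ∀ n ∈ N, k * n * k⁻¹ ∈ N) ∧
      ∀ u v : W, ε u = ε v →
        N.map (MulAut.conj u).toMonoidHom = N.map (MulAut.conj v).toMonoidHom := by
  have h1 : ∀ k ∈ ε.ker, ∀ n ∈ N, k * n * k⁻¹ ∈ N := by
    intro k hk
    rw [← hgen] at hk
    refine Subgroup.iSup_induction (fun p : Λ × B => A p.1 p.2)
      (C := fun k => ∀ n ∈ N, k * n * k⁻¹ ∈ N) hk ?_ ?_ ?_
    · intro p x hx n hn
      by_cases hp : p = (l₀, 1)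
      · subst hp
        exact hNnorm x hx n hn
      · have hc := hcomm p (l₀, 1) hp x hx n (hN hn)
        rw [hc.eq, mul_inv_cancel_right]
        exact hn
    · intro n hn
      simpa using hn
    · intro x y hx hy n hn
      have h := hx _ (hy n hn)
      have e : x * y * n * (x * y)⁻¹ = x * (y * n * y⁻¹) * x⁻¹ := by group
      rw [e]
      exact h
  have h2 : ∀ u v : W, ε u = ε v →
      N.map (MulAut.conj u).toMonoidHom ≤ N.map (MulAut.conj v).toMonoidHom := by
    rintro u v h _ ⟨n, hn, rfl⟩
    refine ⟨(v⁻¹ * u) * n * (v⁻¹ * u)⁻¹, h1 _ ?_ n hn, ?_⟩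
    · simp [MonoidHom.mem_ker, h]
    · simp [mul_assoc]
  exact ⟨h1, fun u v h => le_antisymm (h2 u v h) (h2 v u h.symm)⟩
end
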